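/- Define F₀ on ℝ² \ {0} (Euclidean plane) by F₀(y) = ((‖y‖/2 + 1)/‖y‖) • y. Fix x ≠ 0, set r = ‖x‖ and s = r/2 + 1, and let T be the Fréchet derivative of F₀ at x. Then: F₀ is differentiable at x; the determinant J of T (as a linear map ℝ² → ℝ²) equals s/(2r); and the linear map J⁻¹ • (T ∘ T*) (with T* the adjoint of T with respect to the Euclidean inner product) has determinant 1 and trace s/(s−1) + (s−1)/s. -/

import Mathlib

lemma det_trace_aux (x : EuclideanSpace ℝ (Fin 2)) (a b : ℝ)
    (B : EuclideanSpace ℝ (Fin 2) →ₗ[ℝ] EuclideanSpace ℝ (Fin 2))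
    (hB : ∀ v, B v = a • v + (b * inner ℝ x v) • x) :
    LinearMap.det B = a * (a + b * ‖x‖ ^ 2) ∧
    LinearMap.trace ℝ (EuclideanSpace ℝ (Fin 2)) B = 2 * a + b * ‖x‖ ^ 2 := by
  have hn : ‖x‖ ^ 2 = x 0 ^ 2 + x 1 ^ 2 := by
    rw [EuclideanSpace.real_norm_sq_eq, Fin.sum_univ_two]
  let e := (EuclideanSpace.basisFun (Fin 2) ℝ).toBasis
  have key : ∀ i j, LinearMap.toMatrix e e B i j = a * (if i = j then 1 else 0) + b * x j * x i := by
    intro i j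
    rw [LinearMap.toMatrix_apply]
    simp [e, hB, EuclideanSpace.inner_single_right, Pi.single_apply]
  rw [← LinearMap.det_toMatrix e, LinearMap.trace_eq_matrix_trace ℝ e, Matrix.det_fin_two,
    Matrix.trace_fin_two, hn]
  simp only [key]
  constructor
  · simp; ring
  · simp; ring

lemma hasFDerivAt_aux (x : EuclideanSpace ℝ (Fin 2)) (hx : x ≠ 0)
    (F₀ : EuclideanSpace ℝ (Fin 2) → EuclideanSpace ℝ (Fin 2))
    (hF₀ : ∀ y : EuclideanSpace ℝ (Fin 2), y ≠ 0 →
      F₀ y = ((‖y‖ / 2 + 1) / ‖y‖) • y) :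
    ∃ T : EuclideanSpace ℝ (Fin 2) →L[ℝ] EuclideanSpace ℝ (Fin 2), HasFDerivAt F₀ T x ∧
      ∀ v, T v = (1 / 2 + ‖x‖⁻¹) • v + (-(‖x‖⁻¹ ^ 3) * inner ℝ x v) • x := by
  have hr : ‖x‖ ≠ 0 := norm_ne_zero_iff.mpr hx
  have h1 := ((hasStrictFDerivAt_norm_sq x).hasFDerivAt).sqrt (by positivity)
  have h2 := h1
  simp only [Real.sqrt_sq (norm_nonneg _)] at h2
  have h3 := ((hasDerivAt_inv hr).comp_hasFDerivAt x h2)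
  have h4 := (h3.const_add (1/2)).smul (hasFDerivAt_id x)
  refine ⟨_, h4.congr_of_eventuallyEq ?_, ?_⟩
  · filter_upwards [isOpen_ne.mem_nhds hx] with y hy
    have : ‖y‖ ≠ 0 := norm_ne_zero_iff.mpr hy
    rw [hF₀ y hy]
    simp only [Pi.smul_apply', id, Function.comp]
    congr 1
    field_simp
  · intro v
    simp
    match_scalars
    field_simp


/-- the standard cloaking conductivity, formulas (1.13) and (1.15).
Define `F₀` on `ℝ² \ {0}` by `F₀(y) = ((‖y‖/2 + 1)/‖y‖) • y`. Fix `x ≠ 0`, set `r = ‖x‖`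
and `s = r/2 + 1`, and let `T` be the Fréchet derivative of `F₀` at `x`. Then `F₀` is
differentiable at `x`; the determinant `J` of `T` equals `s/(2r)`; and the linear map
`J⁻¹ • (T ∘ T*)` (with `T*` the Euclidean adjoint of `T`) has determinant `1` and trace
`s/(s−1) + (s−1)/s`. -/
theorem cloaking_conductivity_eigenvalues
    (x : EuclideanSpace ℝ (Fin 2)) (hx : x ≠ 0)
    (r s : ℝ) (hr : r = ‖x‖) (hs : s = r / 2 + 1)
    (F₀ : EuclideanSpace ℝ (Fin 2) → EuclideanSpace ℝ (Fin 2))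
    (hF₀ : ∀ y : EuclideanSpace ℝ (Fin 2), y ≠ 0 →
      F₀ y = ((‖y‖ / 2 + 1) / ‖y‖) • y)
    (T : EuclideanSpace ℝ (Fin 2) →L[ℝ] EuclideanSpace ℝ (Fin 2))
    (hT : T = fderiv ℝ F₀ x)
    (J : ℝ) (hJ : J = LinearMap.det T.toLinearMap)
    (A : EuclideanSpace ℝ (Fin 2) →L[ℝ] EuclideanSpace ℝ (Fin 2))
    (hA : A = J⁻¹ • (T ∘L ContinuousLinearMap.adjoint T)) :
    DifferentiableAt ℝ F₀ x ∧
    J = s / (2 * r) ∧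
    LinearMap.det A.toLinearMap = 1 ∧
    LinearMap.trace ℝ (EuclideanSpace ℝ (Fin 2)) A.toLinearMap
      = s / (s - 1) + (s - 1) / s := by
  obtain ⟨T', hT', hv⟩ := hasFDerivAt_aux x hx F₀ hF₀
  have hTT : T = T' := hT.trans hT'.fderiv
  subst hTT
  rw [← hr] at hv
  have hr0 : 0 < r := hr ▸ norm_pos_iff.mpr hx
  have hs0 : 0 < s := by rw [hs]; positivity
  have hxx : inner ℝ x x = r ^ 2 := by rw [real_inner_self_eq_norm_sq, hr]
  have hJ' : J = s / (2 * r) := by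
    rw [hJ, (det_trace_aux x _ _ T.toLinearMap hv).1, ← hr, hs]
    field_simp
    ring
  have hadj : ContinuousLinearMap.adjoint T = T := by
    symm
    rw [ContinuousLinearMap.eq_adjoint_iff]
    intro u v
    simp only [hv, inner_add_left, inner_add_right, real_inner_smul_left, real_inner_smul_right,
      real_inner_comm u x]
    ring
  have hAv : ∀ v, A.toLinearMap v = (2 * s / r) • v
      + ((r / (2 * s) - 2 * s / r) / r ^ 2 * inner ℝ x v) • x := by
    intro v
    rw [hA, hadj]
    simp only [ContinuousLinearMap.coe_coe, ContinuousLinearMap.smul_apply,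
      ContinuousLinearMap.comp_apply]
    rw [hv (T v), hv v]
    simp only [inner_add_right, real_inner_smul_right, hxx]
    rw [hJ']
    have e : r = 2 * (s - 1) := by linarith
    have e1 : s - 1 ≠ 0 := by intro h; rw [h] at e; linarith
    match_scalars
    · rw [e]; field_simp; ring
    · rw [e]; field_simp; ring
  obtain ⟨hd, ht⟩ := det_trace_aux x _ _ A.toLinearMap hAv
  have e : s - 1 = r / 2 := by linarith
  refine ⟨hT'.differentiableAt, hJ', ?_, ?_⟩
  · rw [hd, ← hr]; field_simp; ring
  · rw [ht, ← hr, e]; field_simp; ring
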